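/- For k₋ = (√6-√2)/4, the complete elliptic integral of the second kind satisfies E(k₋) = 2^(1/3)·3^(-3/4)·π²·Γ(1/3)^(-3) + 2^(-10/3)·3^(-1/4)·π^(-1)·(√3 + 1)·Γ(1/3)³. -/

import Mathlib

open Real MeasureTheory

/-- The complete elliptic integral of the second kind,
`E(k) = ∫₀^{π/2} √(1 - k² sin²θ) dθ`. -/
noncomputable def ellipticE (k : ℝ) : ℝ :=
  ∫ θ in (0:ℝ)..(π/2), Real.sqrt (1 - k^2 * Real.sin θ ^ 2)

/-- The real beta integral on the open unit interval. -/
lemma aux_beta (a b : ℝ) (ha : 0 < a) (hb : 0 < b) :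
    ∫ x in Set.Ioo (0:ℝ) 1, x ^ (a - 1) * (1 - x) ^ (b - 1) =
      Real.Gamma a * Real.Gamma b / Real.Gamma (a + b) := by
  have h := ProbabilityTheory.beta_eq_betaIntegralReal a b ha hb
  rw [ProbabilityTheory.beta] at h
  rw [h, Complex.betaIntegral, intervalIntegral.integral_of_le (by norm_num),
      ← integral_Ioc_eq_integral_Ioo, ← RCLike.re_to_complex, ← integral_re]
  · refine setIntegral_congr_fun measurableSet_Ioc fun x ⟨hx1, hx2⟩ ↦ ?_
    norm_cast
    rw [← Complex.ofReal_cpow, ← Complex.ofReal_cpow, RCLike.re_to_complex,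
        Complex.re_mul_ofReal, Complex.ofReal_re]
    all_goals linarith
  · have := Complex.betaIntegral_convergent (u := a) (v := b) (by simpa) (by simpa)
    rwa [intervalIntegrable_iff_integrableOn_Ioc_of_le (by simp), IntegrableOn] at this

/-- The denominator of `auxW`. -/
noncomputable def auxD (t : ℝ) : ℝ := 1 + cos t + √3 * (1 - cos t)

/-- The substitution function. -/
noncomputable def auxW (t : ℝ) : ℝ := (1 + cos t) / auxD t

/-- The integrand of `E`. -/
noncomputable def auxE (t : ℝ) : ℝ := √(1 - (2 - √3) / 4 * sin t ^ 2)

lemma r_sq : √3 ^ 2 = (3:ℝ) := Real.sq_sqrt (by norm_num)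

lemma r_gt : (1:ℝ) < √3 := by
  rw [Real.lt_sqrt] <;> norm_num

lemma r_lt : √3 < (2:ℝ) := by
  rw [Real.sqrt_lt'] <;> norm_num

lemma auxD_pos (t : ℝ) : 0 < auxD t := by
  have h1 := Real.neg_one_le_cos t
  have h2 := Real.cos_le_one t
  have := r_gt
  unfold auxD
  nlinarith

lemma auxE_arg_pos (t : ℝ) : 0 < 1 - (2 - √3) / 4 * sin t ^ 2 := by
  have h1 := Real.sin_sq_le_one t
  have := r_gt
  have := r_lt
  nlinarith [sq_nonneg (sin t)]

lemma auxE_pos (t : ℝ) : 0 < auxE t := Real.sqrt_pos.2 (auxE_arg_pos t)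

lemma auxE_sq (t : ℝ) : auxE t ^ 2 = 1 - (2 - √3) / 4 * sin t ^ 2 :=
  Real.sq_sqrt (auxE_arg_pos t).le

lemma hasDerivAt_auxD (t : ℝ) : HasDerivAt auxD ((√3 - 1) * sin t) t := by
  have h := (((Real.hasDerivAt_cos t).const_add 1).add
    (((Real.hasDerivAt_cos t).const_sub 1).const_mul √3))
  exact h.congr_deriv (by ring)

lemma hasDerivAt_auxW (t : ℝ) : HasDerivAt auxW (-(2 * √3 * sin t) / auxD t ^ 2) t := by
  have h := ((Real.hasDerivAt_cos t).const_add 1).div (hasDerivAt_auxD t) (auxD_pos t).ne'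
  refine h.congr_deriv ?_
  congr 1
  unfold auxD
  ring

lemma hasDerivAt_auxE (t : ℝ) :
    HasDerivAt auxE (-((2 - √3) / 4 * sin t * cos t) / auxE t) t := by
  have h := (((Real.hasDerivAt_sin t).pow 2).const_mul ((2 - √3) / 4)).const_sub 1
  have h2 := h.sqrt (auxE_arg_pos t).ne'
  refine h2.congr_deriv ?_
  have := auxE_pos t
  unfold auxE at *
  field_simp
  norm_num
  ring

lemma cont_auxE : Continuous auxE :=
  continuous_iff_continuousAt.2 fun t => (hasDerivAt_auxE t).continuousAt

lemma cont_auxW : Continuous auxW :=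
  continuous_iff_continuousAt.2 fun t => (hasDerivAt_auxW t).continuousAt

/-- Algebraic decomposition of the integrand up to an exact derivative. -/
lemma hasDerivAt_G (t : ℝ) :
    HasDerivAt (fun t => -(√3 - 1) * (sin t * auxE t) / auxD t)
      (auxE t - ((√3 + 1) / (2 * √3) * (auxE t)⁻¹ + 1 / √3 * (auxW t ^ 2 * (auxE t)⁻¹))) t := by
  have h := ((((Real.hasDerivAt_sin t).mul (hasDerivAt_auxE t)).const_mul (-(√3 - 1))).div
    (hasDerivAt_auxD t) (auxD_pos t).ne')
  refine h.congr_deriv ?_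
  have h1 := auxE_pos t
  have h2 := auxD_pos t
  have h3 := auxE_sq t
  have h4 := Real.sin_sq_add_cos_sq t
  have hr := r_sq
  have hr0 : (0:ℝ) < √3 := by positivity
  unfold auxW
  simp only [Pi.mul_apply]
  have hD : auxD t = 1 + cos t + √3 * (1 - cos t) := rfl
  generalize auxE t = e at *
  generalize auxD t = D at *
  generalize sin t = s at *
  generalize cos t = c at *
  generalize √3 = r at *
  field_simp
  have hs : s ^ 2 = 1 - c ^ 2 := by linarith
  rw [hs] at h3
  subst hD
  grind

lemma auxW_pos {t : ℝ} (ht : t ∈ Set.Ioo 0 π) : 0 < auxW t := by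
  have : cos π < cos t := Real.cos_lt_cos_of_nonneg_of_le_pi ht.1.le le_rfl ht.2
  rw [cos_pi] at this
  exact div_pos (by linarith) (auxD_pos t)

lemma one_sub_auxW_pos {t : ℝ} (ht : t ∈ Set.Ioo 0 π) : 0 < 1 - auxW t := by
  have : cos t < cos 0 := Real.cos_lt_cos_of_nonneg_of_le_pi le_rfl ht.2.le ht.1
  rw [cos_zero] at this
  have h : 1 - auxW t = √3 * (1 - cos t) / auxD t := by
    have := (auxD_pos t).ne'
    unfold auxW
    field_simp
    unfold auxD
    ring
  rw [h]
  exact div_pos (mul_pos (by positivity) (by linarith)) (auxD_pos t)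

lemma auxW_anti : StrictAntiOn auxW (Set.Icc 0 π) := by
  apply strictAntiOn_of_deriv_neg (convex_Icc 0 π) cont_auxW.continuousOn
  intro t ht
  rw [interior_Icc] at ht
  rw [(hasDerivAt_auxW t).deriv]
  have := Real.sin_pos_of_pos_of_lt_pi ht.1 ht.2
  have := auxD_pos t
  have hr0 : (0:ℝ) < √3 := by positivity
  rw [neg_div]
  apply neg_neg_of_pos
  positivity

lemma auxW_image : (fun t => auxW t ^ 3) '' Set.Ioo 0 π = Set.Ioo 0 1 := by
  ext u
  constructor
  · rintro ⟨t, ht, rfl⟩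
    have h1 := auxW_pos ht
    have h2 := one_sub_auxW_pos ht
    exact ⟨by positivity, pow_lt_one₀ h1.le (by linarith) (by norm_num)⟩
  · intro hu
    have hc : ContinuousOn (fun t => auxW t ^ 3) (Set.Icc 0 π) := (cont_auxW.pow 3).continuousOn
    have := intermediate_value_Ioo' pi_pos.le hc
    apply this
    have e0 : auxW 0 = 1 := by simp [auxW, auxD]
    have e1 : auxW π = 0 := by simp [auxW]
    simpa [e0, e1] using hu

lemma auxW_inj : Set.InjOn (fun t => auxW t ^ 3) (Set.Ioo 0 π) := by
  intro x hx y hy h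
  have h1 : auxW x = auxW y :=
    (pow_left_inj₀ (auxW_pos hx).le (auxW_pos hy).le (by norm_num)).1 h
  exact auxW_anti.injOn (Set.Ioo_subset_Icc_self hx) (Set.Ioo_subset_Icc_self hy) h1

/-- key square root. -/
lemma aux_sqrt {t : ℝ} (ht : t ∈ Set.Ioo 0 π) :
    √(auxW t) * √(1 - auxW t ^ 3) = 2 * √3 * √(√3) * (sin t * auxE t) / auxD t ^ 2 := by
  have hs := Real.sin_pos_of_pos_of_lt_pi ht.1 ht.2
  have h1 := auxE_pos t
  have h2 := auxD_pos t
  rw [← Real.sqrt_mul (auxW_pos ht).le]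
  rw [Real.sqrt_eq_iff_mul_self_eq_of_pos (by positivity)]
  have hrr : √(√3) ^ 2 = √3 := Real.sq_sqrt (by positivity)
  have h3 := auxE_sq t
  have h4 := Real.sin_sq_add_cos_sq t
  have hr := r_sq
  have e : (2 * √3 * √(√3) * (sin t * auxE t) / auxD t ^ 2) ^ 2
      = 4 * √3 ^ 2 * √(√3) ^ 2 * (sin t ^ 2 * auxE t ^ 2) / auxD t ^ 4 := by
    field_simp
    ring
  rw [← sq, e, hrr, h3, hr]
  have hs : sin t ^ 2 = 1 - cos t ^ 2 := by linarith
  rw [hs]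
  unfold auxW
  field_simp
  unfold auxD
  generalize cos t = c at *
  generalize √3 = r at *
  grind

lemma aux_subst (a : ℝ) (f : ℝ → ℝ)
    (hf : ∀ w : ℝ, 0 < w → w ^ 2 * (w ^ 3) ^ (a - 1) = f w / √w) (ha : 0 < a) :
    ∫ t in (0:ℝ)..π, f (auxW t) * (auxE t)⁻¹ =
      √(√3) / 3 * (Real.Gamma a * Real.Gamma (1 / 2) / Real.Gamma (a + 1 / 2)) := by
  rw [← aux_beta a (1 / 2) ha (by norm_num), ← auxW_image,
    integral_image_eq_integral_abs_deriv_smul measurableSet_Ioo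
      (f := fun t => auxW t ^ 3)
      (fun x _ => ((hasDerivAt_auxW x).pow 3).hasDerivWithinAt) auxW_inj,
    intervalIntegral.integral_of_le pi_pos.le, integral_Ioc_eq_integral_Ioo,
    ← integral_const_mul]
  refine setIntegral_congr_fun measurableSet_Ioo fun t ht ↦ ?_
  have hs := Real.sin_pos_of_pos_of_lt_pi ht.1 ht.2
  have h1 := auxE_pos t
  have h2 := auxD_pos t
  have h3 := auxW_pos ht
  have h4 := one_sub_auxW_pos ht
  have h5 : 0 < 1 - auxW t ^ 3 := by
    have := pow_lt_one₀ h3.le (show auxW t < 1 by linarith) (show 3 ≠ 0 by norm_num)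
    linarith
  have hr0 : (0:ℝ) < √3 := by positivity
  have hrr0 : (0:ℝ) < √(√3) := by positivity
  have k := aux_sqrt ht
  have e1 : (1 - auxW t ^ 3) ^ ((1:ℝ) / 2 - 1) = (√(1 - auxW t ^ 3))⁻¹ := by
    rw [Real.sqrt_eq_rpow, ← Real.rpow_neg h5.le]
    norm_num
  have e2 : |((3:ℕ):ℝ) * auxW t ^ (3 - 1) * (-(2 * √3 * sin t) / auxD t ^ 2)|
      = 3 * auxW t ^ 2 * (2 * √3 * sin t / auxD t ^ 2) := by
    rw [neg_div, mul_neg, abs_neg, abs_of_nonneg (by positivity)]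
    norm_num
  simp only [smul_eq_mul]
  rw [e1, e2]
  have hw := hf _ h3
  have e3 : f (auxW t) = auxW t ^ 2 * (auxW t ^ 3) ^ (a - 1) * √(auxW t) := by
    have : 0 < √(auxW t) := Real.sqrt_pos.2 h3
    rw [hw]; field_simp
  rw [e3]
  have p1 : 0 < √(auxW t) := Real.sqrt_pos.2 h3
  have p2 : 0 < √(1 - auxW t ^ 3) := Real.sqrt_pos.2 h5
  generalize (auxW t ^ 3) ^ (a - 1) = X at *
  field_simp at k ⊢
  linear_combination X * k

lemma aux_A : ∫ t in (0:ℝ)..π, (auxE t)⁻¹ =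
    √(√3) / 3 * (Real.Gamma (1/6) * Real.Gamma (1 / 2) / Real.Gamma (2/3)) := by
  have := aux_subst (1/6) (fun _ => 1) (fun w hw => by
    rw [Real.sqrt_eq_rpow, ← Real.rpow_natCast, ← Real.rpow_natCast, ← Real.rpow_mul hw.le,
      ← Real.rpow_add hw, one_div (w ^ _), ← Real.rpow_neg hw.le]
    norm_num) (by norm_num)
  norm_num at this ⊢
  exact this

lemma aux_B : ∫ t in (0:ℝ)..π, auxW t ^ 2 * (auxE t)⁻¹ =
    √(√3) / 3 * (Real.Gamma (5/6) * Real.Gamma (1 / 2) / Real.Gamma (4/3)) := by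
  have := aux_subst (5/6) (fun w => w ^ 2) (fun w hw => by
    rw [Real.sqrt_eq_rpow, ← Real.rpow_natCast, ← Real.rpow_natCast, ← Real.rpow_mul hw.le,
      ← Real.rpow_add hw, ← Real.rpow_sub hw]
    norm_num) (by norm_num)
  norm_num at this ⊢
  exact this

lemma aux_int : ∫ t in (0:ℝ)..π, auxE t =
    (√3 + 1) / (2 * √3) * (∫ t in (0:ℝ)..π, (auxE t)⁻¹)
      + 1 / √3 * ∫ t in (0:ℝ)..π, auxW t ^ 2 * (auxE t)⁻¹ := by
  have c1 : Continuous fun t => (auxE t)⁻¹ := cont_auxE.inv₀ fun t => (auxE_pos t).ne'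
  have c2 : Continuous fun t => auxW t ^ 2 * (auxE t)⁻¹ := (cont_auxW.pow 2).mul c1
  have c3 : Continuous fun t => (√3 + 1) / (2 * √3) * (auxE t)⁻¹ := c1.const_mul _
  have c4 : Continuous fun t => 1 / √3 * (auxW t ^ 2 * (auxE t)⁻¹) := c2.const_mul _
  have c5 : Continuous fun t => (√3 + 1) / (2 * √3) * (auxE t)⁻¹
      + 1 / √3 * (auxW t ^ 2 * (auxE t)⁻¹) := c3.add c4
  have h := intervalIntegral.integral_eq_sub_of_hasDerivAt (a := 0) (b := π)
    (fun t _ => hasDerivAt_G t) ((cont_auxE.sub c5).intervalIntegrable 0 π)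
  rw [intervalIntegral.integral_sub (cont_auxE.intervalIntegrable 0 π)
    (c5.intervalIntegrable 0 π), intervalIntegral.integral_add (c3.intervalIntegrable 0 π)
    (c4.intervalIntegrable 0 π), intervalIntegral.integral_const_mul,
    intervalIntegral.integral_const_mul] at h
  simp only [sin_pi, sin_zero, zero_mul, mul_zero, zero_div, sub_zero] at h
  linarith

lemma aux_half : 2 * ellipticE ((√6 - √2) / 4) = ∫ t in (0:ℝ)..π, auxE t := by
  have hk : ((√6 - √2) / 4) ^ 2 = (2 - √3) / 4 := by
    have h6 : √6 = √2 * √3 := by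
      rw [← Real.sqrt_mul (by norm_num)]; norm_num
    have h2 : √2 ^ 2 = (2:ℝ) := Real.sq_sqrt (by norm_num)
    have h3 := r_sq
    rw [h6]
    linear_combination (√3 - 1) ^ 2 / 16 * h2 + 1 / 8 * h3
  have e : ellipticE ((√6 - √2) / 4) = ∫ t in (0:ℝ)..(π/2), auxE t := by
    unfold ellipticE
    rw [hk]
    rfl
  have e2 : ∫ t in (π/2)..π, auxE t = ∫ t in (0:ℝ)..(π/2), auxE t := by
    have := intervalIntegral.integral_comp_sub_left (a := 0) (b := π/2) auxE π
    rw [show π - π/2 = π/2 by ring, sub_zero] at this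
    rw [← this]
    congr 1
    ext t
    simp [auxE]
  rw [e, ← intervalIntegral.integral_add_adjacent_intervals
    (cont_auxE.intervalIntegrable 0 (π/2)) (cont_auxE.intervalIntegrable (π/2) π), e2]
  ring

/-- `E(k₋) = 2^(1/3)·3^(-3/4)·π²·Γ(1/3)⁻³ + 2^(-10/3)·3^(-1/4)·π⁻¹·(√3+1)·Γ(1/3)³`
for `k₋ = (√6-√2)/4`. -/
theorem ellipticE_singular_value_minus :
    ellipticE ((Real.sqrt 6 - Real.sqrt 2) / 4) =
      (2:ℝ) ^ ((1:ℝ)/3) * (3:ℝ) ^ (-(3:ℝ)/4) * π ^ 2 * (Real.Gamma (1/3)) ^ (-(3:ℤ)) +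
      (2:ℝ) ^ (-(10:ℝ)/3) * (3:ℝ) ^ (-(1:ℝ)/4) * π⁻¹ * (Real.sqrt 3 + 1) * Real.Gamma (1/3) ^ 3 := by
  have h := aux_half
  rw [aux_int, aux_A, aux_B, Real.Gamma_one_half_eq] at h
  have g1 := Real.Gamma_mul_Gamma_one_sub (1/3)
  have g2 := Real.Gamma_mul_Gamma_add_half (1/6)
  have g3 := Real.Gamma_mul_Gamma_add_half (1/3)
  have g4 := Real.Gamma_add_one (s := 1/3) (by norm_num)
  rw [show π * (1/3) = π / 3 by ring, Real.sin_pi_div_three] at g1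
  norm_num at g1 g2 g3 g4
  have p1 : 0 < Real.Gamma (1/3) := Real.Gamma_pos_of_pos (by norm_num)
  have p2 : 0 < Real.Gamma (2/3) := Real.Gamma_pos_of_pos (by norm_num)
  have hpi : √π ^ 2 = π := Real.sq_sqrt pi_pos.le
  have hsp : 0 < √π := Real.sqrt_pos.2 pi_pos
  obtain ⟨q, hq, q0⟩ : ∃ q : ℝ, q = (3:ℝ) ^ ((1:ℝ)/4) ∧ 0 < q := ⟨_, rfl, by positivity⟩
  obtain ⟨c, hc, c0⟩ : ∃ c : ℝ, c = (2:ℝ) ^ ((1:ℝ)/3) ∧ 0 < c := ⟨_, rfl, by positivity⟩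
  have hc3 : c ^ 3 = 2 := by
    rw [hc, ← Real.rpow_natCast, ← Real.rpow_mul (by norm_num)]; norm_num
  have hq4 : q ^ 4 = 3 := by
    rw [hq, ← Real.rpow_natCast, ← Real.rpow_mul (by norm_num)]; norm_num
  have r1 : √3 = q ^ 2 := by
    rw [Real.sqrt_eq_iff_mul_self_eq_of_pos (by positivity)]; linear_combination hq4
  have r2 : √(q ^ 2) = q := Real.sqrt_sq q0.le
  have t1 : (2:ℝ) ^ ((2:ℝ)/3) = c ^ 2 := by
    rw [hc, ← Real.rpow_natCast, ← Real.rpow_mul (by norm_num)]; norm_num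
  have t2 : (2:ℝ) ^ (-(10:ℝ)/3) = (c ^ 10)⁻¹ := by
    rw [hc, ← Real.rpow_natCast, ← Real.rpow_mul (by norm_num), ← Real.rpow_neg (by norm_num)]
    norm_num
  have t3 : (3:ℝ) ^ (-(3:ℝ)/4) = (q ^ 3)⁻¹ := by
    rw [hq, ← Real.rpow_natCast, ← Real.rpow_mul (by norm_num), ← Real.rpow_neg (by norm_num)]
    norm_num
  have t4 : (3:ℝ) ^ (-(1:ℝ)/4) = q⁻¹ := by
    rw [hq, ← Real.rpow_neg (by norm_num)]
    norm_num
  have t5 : (Real.Gamma (1/3)) ^ (-(3:ℤ)) = (Real.Gamma (1/3) ^ 3)⁻¹ := by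
    rw [zpow_neg]; rfl
  rw [t2, t3, t4, t5, ← hc]
  rw [t1] at g2
  rw [← hc] at g3
  rw [g4] at h
  rw [r1, r2] at h
  rw [r1] at g1
  rw [r1]
  generalize Real.Gamma (1/3) = x at *
  generalize Real.Gamma (2/3) = y at *
  generalize Real.Gamma (1/6) = z at *
  generalize Real.Gamma (5/6) = v at *
  generalize ellipticE ((√6 - √2) / 4) = E at *
  generalize √π = s at *
  have hz : z = x * c ^ 2 * s / y := by field_simp; linarith
  have hv : v = y * c * s / x := by field_simp; linarith
  have hy : y = 2 * π / (q ^ 2 * x) := by field_simp at g1 ⊢; linarith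
  have hE : E = (2 * E) / 2 := by ring
  rw [hE, h, hz, hv, hy, ← hpi]
  field_simp
  have hc12 : c ^ 12 = 16 := by
    rw [show c ^ 12 = (c ^ 3) ^ 4 by ring, hc3]; norm_num
  linear_combination q ^ 6 * (q ^ 2 + 1) * x ^ 6 * hc12 + 16 * q ^ 2 * (q ^ 2 + 1) * x ^ 6 * hq4
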